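/- arXiv:1909.08600 — 2 statements merged into one kernel-verified Lean document; each statement's English description precedes it below -/
import Mathlib

section
/- Let λ ∈ ℝ satisfy 1/2 ≤ λ² < 1 and set ρ* = 2λ√(1−λ²) and μ = √(1−λ²). Define h(ρ) = λ/√(1+ρ) for ρ ∈ [0, ρ*] and g(ρ) = (ρ + 2λ² + √(ρ² − 4λ²(1−λ²)))/(2(ρ+1)) for ρ ∈ [ρ*, ∞). Then: (a) ρ* ≤ 1; (b) for ρ ≥ 0, ρ² − 4λ²(1−λ²) ≥ 0 if and only if ρ ≥ ρ*; (c) h is strictly decreasing on [0, ρ*] and g is strictly increasing on [ρ*, ∞); (d) g(ρ*) = h(ρ*) = λ/√(1+ρ*); (e) g(ρ) < 1 for all ρ ≥ ρ*. Consequently the piecewise function equal to h on [0, ρ*] and to g on [ρ*, ∞) attains its minimum value λ/√(1+ρ*) exactly at ρ = ρ*. -/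
noncomputable section

/-!
With `l = λ` and `m = √(1 - l²)` one has `l² + m² = 1`, hence `ρ* = 2lm ≤ 1` and
`1 + ρ* = (l + m)²`, so that both `g` and `h` equal `l / (l + m)` at `ρ*`.

The value `g ρ` is the larger root of `q_ρ(x) = (ρ + 1) x² - (ρ + 2l²) x + l²`, whose discriminant
is `ρ² - 4l²(1 - l²)`. For fixed `x ∈ (0, 1)` the map `ρ ↦ q_ρ(x) = ρ (x² - x) + (x² - 2l²x + l²)`
is strictly decreasing. Since `0 < g a < 1`, for `a < b` this gives `q_b(g a) < q_a(g a) = 0`, so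
`g a` lies strictly below the larger root `g b` of `q_b`. The piecewise function is thus strictly
decreasing up to `ρ*` and strictly increasing afterwards.
-/

/-- Let `λ` satisfy `1/2 ≤ λ² < 1` (being a singular value, `λ ≥ 0`)
and set `ρ* = 2λ√(1−λ²)`, `μ = √(1−λ²)`, `h(ρ) = λ/√(1+ρ)` on `[0, ρ*]` and
`g(ρ) = (ρ + 2λ² + √(ρ² − 4λ²(1−λ²)))/(2(ρ+1))` on `[ρ*, ∞)`. Then:
(a) `ρ* ≤ 1`; (b) for `ρ ≥ 0`, `ρ² − 4λ²(1−λ²) ≥ 0` iff `ρ ≥ ρ*`;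
(c) `h` is strictly decreasing on `[0, ρ*]` and `g` strictly increasing on `[ρ*, ∞)`;
(d) `g(ρ*) = h(ρ*) = λ/√(1+ρ*)`; (e) `g(ρ) < 1` for all `ρ ≥ ρ*`.
Consequently the piecewise function equal to `h` on `[0, ρ*]` and to `g` on `[ρ*, ∞)`
attains its minimum value `λ/√(1+ρ*)` exactly at `ρ = ρ*`. -/
theorem stmt_12 (lam : ℝ) (hlam0 : 0 ≤ lam) (h1 : 1 / 2 ≤ lam ^ 2) (h2 : lam ^ 2 < 1) :
    let μ : ℝ := Real.sqrt (1 - lam ^ 2)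
    let ρs : ℝ := 2 * lam * μ
    let h : ℝ → ℝ := fun ρ => lam / Real.sqrt (1 + ρ)
    let g : ℝ → ℝ := fun ρ =>
      (ρ + 2 * lam ^ 2 + Real.sqrt (ρ ^ 2 - 4 * lam ^ 2 * (1 - lam ^ 2))) / (2 * (ρ + 1))
    let F : ℝ → ℝ := fun ρ => if ρ ≤ ρs then h ρ else g ρ
    (ρs ≤ 1) ∧
    (∀ ρ : ℝ, 0 ≤ ρ → (0 ≤ ρ ^ 2 - 4 * lam ^ 2 * (1 - lam ^ 2) ↔ ρs ≤ ρ)) ∧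
    (StrictAntiOn h (Set.Icc 0 ρs)) ∧
    (StrictMonoOn g (Set.Ici ρs)) ∧
    (g ρs = h ρs ∧ h ρs = lam / Real.sqrt (1 + ρs)) ∧
    (∀ ρ : ℝ, ρs ≤ ρ → g ρ < 1) ∧
    (∀ ρ : ℝ, 0 ≤ ρ → F ρs ≤ F ρ) ∧
    (∀ ρ : ℝ, 0 ≤ ρ → F ρ = F ρs → ρ = ρs) ∧
    F ρs = lam / Real.sqrt (1 + ρs) := by
  intro μ ρs h g F
  have hm2 : μ ^ 2 = 1 - lam ^ 2 := Real.sq_sqrt (by linarith)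
  have hm : 0 < μ := Real.sqrt_pos.mpr (by linarith)
  have hl : 0 < lam := by
    rcases hlam0.eq_or_lt with e | e
    · rw [← e] at h1; norm_num at h1
    · exact e
  have hρs : ρs = 2 * lam * μ := rfl
  have hρ0 : 0 < ρs := by rw [hρs]; positivity
  have hρ2 : ρs ^ 2 = 4 * lam ^ 2 * (1 - lam ^ 2) := by rw [hρs, ← hm2]; ring
  have hiff : ∀ ρ : ℝ, 0 ≤ ρ → (0 ≤ ρ ^ 2 - 4 * lam ^ 2 * (1 - lam ^ 2) ↔ ρs ≤ ρ) := by
    intro ρ hρ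
    rw [← hρ2, sub_nonneg, pow_le_pow_iff_left₀ hρ0.le hρ two_ne_zero]
  have hanti : StrictAntiOn h (Set.Icc 0 ρs) := by
    intro a ha b hb hab
    have ha0 : 0 ≤ a := ha.1
    exact div_lt_div_of_pos_left hl (Real.sqrt_pos.mpr (by linarith))
      (Real.sqrt_lt_sqrt (by linarith) (by linarith))
  have hg1 : ∀ ρ : ℝ, ρs ≤ ρ → g ρ < 1 := by
    intro ρ hρ
    have hρp : 0 < ρ := hρ0.trans_le hρ
    have hs : Real.sqrt (ρ ^ 2 - 4 * lam ^ 2 * (1 - lam ^ 2)) ≤ ρ := by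
      rw [← hρ2]
      exact Real.sqrt_le_iff.mpr ⟨hρp.le, by nlinarith⟩
    change _ / _ < _
    rw [div_lt_one (by linarith)]
    linarith
  have hg0 : ∀ ρ : ℝ, ρs ≤ ρ → 0 < g ρ := by
    intro ρ hρ
    have hρp : 0 < ρ := hρ0.trans_le hρ
    change 0 < _ / _
    positivity
  have hmono : StrictMonoOn g (Set.Ici ρs) := by
    intro a ha b hb hab
    have ha : ρs ≤ a := ha
    have hb : ρs ≤ b := hb
    have hap : 0 < a := hρ0.trans_le ha
    have hbp : 0 < b := hρ0.trans_le hb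
    have hx0 := hg0 a ha
    have hx1 := hg1 a ha
    have hsa := Real.sq_sqrt ((hiff a hap.le).mpr ha)
    have hxa : 2 * (a + 1) * g a
        = a + 2 * lam ^ 2 + Real.sqrt (a ^ 2 - 4 * lam ^ 2 * (1 - lam ^ 2)) :=
      mul_div_cancel₀ _ (by positivity)
    generalize g a = x at hx0 hx1 hxa
    have hq : (a + 1) * x ^ 2 - (a + 2 * lam ^ 2) * x + lam ^ 2 = 0 := by
      have e : Real.sqrt (a ^ 2 - 4 * lam ^ 2 * (1 - lam ^ 2))
          = 2 * (a + 1) * x - (a + 2 * lam ^ 2) := by linarith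
      rw [e] at hsa
      have : 4 * (a + 1) * ((a + 1) * x ^ 2 - (a + 2 * lam ^ 2) * x + lam ^ 2) = 0 := by
        linear_combination hsa
      exact (mul_eq_zero.mp this).resolve_left (by positivity)
    have hqb : (b + 1) * x ^ 2 - (b + 2 * lam ^ 2) * x + lam ^ 2 < 0 := by
      have : 0 < (b - a) * (x * (1 - x)) :=
        mul_pos (by linarith) (mul_pos hx0 (by linarith))
      nlinarith
    -- Completing the square turns `q_b(x) < 0` into a bound by the root of the discriminant.
    have hlt : 2 * (b + 1) * x - (b + 2 * lam ^ 2)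
        < Real.sqrt (b ^ 2 - 4 * lam ^ 2 * (1 - lam ^ 2)) := by
      apply Real.lt_sqrt_of_sq_lt
      have : (b + 1) * ((b + 1) * x ^ 2 - (b + 2 * lam ^ 2) * x + lam ^ 2) < 0 :=
        mul_neg_of_pos_of_neg (by linarith) hqb
      nlinarith
    change x < _ / _
    rw [lt_div_iff₀ (by linarith)]
    linarith
  have hgh : g ρs = h ρs := by
    have hsq : 1 + ρs = (lam + μ) ^ 2 := by rw [hρs]; linear_combination -hm2
    change (ρs + 2 * lam ^ 2 + Real.sqrt (ρs ^ 2 - 4 * lam ^ 2 * (1 - lam ^ 2))) / (2 * (ρs + 1))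
      = lam / Real.sqrt (1 + ρs)
    rw [← hρ2, sub_self, Real.sqrt_zero, add_comm ρs 1, hsq, Real.sqrt_sq (by positivity), hρs]
    field_simp
    ring
  have hFs : F ρs = h ρs := if_pos le_rfl
  have hF : ∀ ρ : ℝ, 0 ≤ ρ → ρ ≠ ρs → F ρs < F ρ := by
    intro ρ hρ hne
    rw [hFs]
    rcases lt_or_gt_of_ne hne with hlt | hgt
    · rw [show F ρ = h ρ from if_pos hlt.le]
      exact hanti ⟨hρ, hlt.le⟩ ⟨hρ0.le, le_rfl⟩ hlt
    · rw [show F ρ = g ρ from if_neg hgt.not_ge, ← hgh]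
      exact hmono Set.self_mem_Ici hgt.le hgt
  refine ⟨?_, hiff, hanti, hmono, ⟨hgh, rfl⟩, hg1, ?_, ?_, hFs⟩
  · rw [hρs]
    nlinarith [sq_nonneg (lam - μ)]
  · intro ρ hρ
    rcases eq_or_ne ρ ρs with e | e
    · rw [e]
    · exact (hF ρ hρ e).le
  · intro ρ hρ he
    by_contra hne
    exact (hF ρ hρ hne).ne' he
end
end

section
/- Let ρ > 0, β > 0 and a ≥ 0 be real numbers. The function φ(t) = t² − β² ln(t²) + (ρ/2)(t − a)², defined for t > 0, attains its global minimum over (0, ∞) at the unique point t* = (ρa + √(ρ²a² + 8(2+ρ)β²)) / (2(ρ+2)); equivalently, t* is the unique positive root of (2+ρ)t² − ρat − 2β² = 0 and φ(t) ≥ φ(t*) for all t > 0. -/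
/-! The point `s = t*` is the positive root of `(2+ρ)s² − ρas − 2β² = 0`, which is the equation
`φ'(s) = 0` multiplied by `s`. Uniqueness of the positive root: if `t > 0` is another one, then
`(t − s)((2+ρ)t + ((2+ρ)s − ρa)) = 0`, where `(2+ρ)s − ρa = 2β²/s > 0`. Minimality: bounding
`ln (t/s) ≤ t/s − 1` and using the equation for `s` gives the quadratic growth estimate
`φ(t) ≥ φ(s) + (1 + ρ/2)(t − s)²` (`poissonObj_growth`), from which both the weak and the strict
inequality follow. -/

noncomputable section

/-- The scalar Poisson proximal objective `φ(t) = t² − β² ln(t²) + (ρ/2)(t − a)²`. -/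
def poissonObj (ρ β a t : ℝ) : ℝ :=
  t ^ 2 - β ^ 2 * Real.log (t ^ 2) + (ρ / 2) * (t - a) ^ 2

/-- The claimed minimizer `t* = (ρa + √(ρ²a² + 8(2+ρ)β²)) / (2(ρ+2))`. -/
def poissonProx (ρ β a : ℝ) : ℝ :=
  (ρ * a + Real.sqrt (ρ ^ 2 * a ^ 2 + 8 * (2 + ρ) * β ^ 2)) / (2 * (ρ + 2))

theorem poissonProx_pos (ρ β a : ℝ) (hρ : 0 < ρ) (hβ : 0 < β) (ha : 0 ≤ a) :
    0 < poissonProx ρ β a := by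
  unfold poissonProx
  have : 0 < Real.sqrt (ρ ^ 2 * a ^ 2 + 8 * (2 + ρ) * β ^ 2) := Real.sqrt_pos.2 (by positivity)
  positivity

theorem poissonProx_root (ρ β a : ℝ) (hρ : 0 < ρ) :
    (2 + ρ) * (poissonProx ρ β a) ^ 2 - ρ * a * poissonProx ρ β a - 2 * β ^ 2 = 0 := by
  unfold poissonProx
  have h : Real.sqrt (ρ ^ 2 * a ^ 2 + 8 * (2 + ρ) * β ^ 2) ^ 2
      = ρ ^ 2 * a ^ 2 + 8 * (2 + ρ) * β ^ 2 := Real.sq_sqrt (by positivity)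
  set r := Real.sqrt (ρ ^ 2 * a ^ 2 + 8 * (2 + ρ) * β ^ 2)
  have h2 : ρ + 2 ≠ 0 := by positivity
  field_simp
  linear_combination (ρ + 2) * h

/-- Quadratic growth of the objective around any positive critical point. -/
theorem poissonObj_growth (ρ β a s t : ℝ) (hs : 0 < s) (ht : 0 < t)
    (hroot : (2 + ρ) * s ^ 2 - ρ * a * s - 2 * β ^ 2 = 0) :
    poissonObj ρ β a s + (1 + ρ / 2) * (t - s) ^ 2 ≤ poissonObj ρ β a t := by
  have hlog : Real.log t - Real.log s ≤ t / s - 1 := by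
    rw [← Real.log_div ht.ne' hs.ne']
    exact Real.log_le_sub_one_of_pos (div_pos ht hs)
  have hmul := mul_le_mul_of_nonneg_left hlog (by positivity : 0 ≤ 2 * β ^ 2)
  have hcrit : 2 * β ^ 2 * (t / s - 1) = (t - s) * ((2 + ρ) * s - ρ * a) := by
    field_simp
    linear_combination (s - t) * hroot
  unfold poissonObj
  rw [Real.log_pow, Real.log_pow]
  push_cast
  linarith

/-- For `ρ > 0`, `β > 0`, `a ≥ 0`, the function
`φ(t) = t² − β² ln(t²) + (ρ/2)(t − a)²` on `(0,∞)` attains its global minimum at the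
unique point `t* = (ρa + √(ρ²a² + 8(2+ρ)β²))/(2(ρ+2))`; equivalently `t*` is the unique
positive root of `(2+ρ)t² − ρat − 2β² = 0` and `φ(t) ≥ φ(t*)` for all `t > 0`. -/
theorem stmt_15 (ρ β a : ℝ) (hρ : 0 < ρ) (hβ : 0 < β) (ha : 0 ≤ a) :
    0 < poissonProx ρ β a ∧
    ((2 + ρ) * (poissonProx ρ β a) ^ 2 - ρ * a * poissonProx ρ β a - 2 * β ^ 2 = 0) ∧
    (∀ t : ℝ, 0 < t → (2 + ρ) * t ^ 2 - ρ * a * t - 2 * β ^ 2 = 0 → t = poissonProx ρ β a) ∧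
    (∀ t : ℝ, 0 < t → poissonObj ρ β a (poissonProx ρ β a) ≤ poissonObj ρ β a t) ∧
    (∀ t : ℝ, 0 < t → t ≠ poissonProx ρ β a →
      poissonObj ρ β a (poissonProx ρ β a) < poissonObj ρ β a t) := by
  have hs := poissonProx_pos ρ β a hρ hβ ha
  have hroot := poissonProx_root ρ β a hρ
  refine ⟨hs, hroot, fun t ht h => ?_, fun t ht => ?_, fun t ht hne => ?_⟩
  · set s := poissonProx ρ β a
    have hpos : 0 < (2 + ρ) * s - ρ * a := by
      refine pos_of_mul_pos_left (b := s) ?_ hs.le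
      have : 0 < β ^ 2 := by positivity
      linarith
    have hsum : (2 + ρ) * t + ((2 + ρ) * s - ρ * a) ≠ 0 := by positivity
    have hprod : (t - s) * ((2 + ρ) * t + ((2 + ρ) * s - ρ * a)) = 0 := by
      linear_combination h - hroot
    exact sub_eq_zero.1 ((mul_eq_zero.1 hprod).resolve_right hsum)
  · have hg := poissonObj_growth ρ β a _ t hs ht hroot
    have : 0 ≤ (1 + ρ / 2) * (t - poissonProx ρ β a) ^ 2 := by positivity
    linarith
  · have hg := poissonObj_growth ρ β a _ t hs ht hroot
    have hne' := sub_ne_zero.2 hne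
    have : 0 < (1 + ρ / 2) * (t - poissonProx ρ β a) ^ 2 := by positivity
    linarith
end
end
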